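/- arXiv:1807.06345 — 2 statements merged into one kernel-verified Lean document; each statement's English description precedes it below -/
import Mathlib

section
/- For any four jointly distributed finite random variables X1, X2, X3, X4 and any natural number s ≥ 1, the second Matúš inequality holds: s[I(X2:X3|X1) + 2 I(X1:X2|X3) + I(X1:X2|X4) + I(X3:X4) - I(X1:X2)] + I(X1:X3|X2) + (s(s-1)/2)[I(X2:X4|X1) + I(X1:X2|X4)] ≥ 0, where I(·:·) denotes mutual information and I(·:·|·) denotes conditional mutual information. -/
open MeasureTheory ProbabilityTheory

/-- Shannon entropy of a finite-valued random variable `X` under the measure `μ`. -/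
noncomputable def entH {Ω E : Type*} [MeasurableSpace Ω] [Fintype E]
    (μ : Measure Ω) (X : Ω → E) : ℝ :=
  ∑ e : E, Real.negMulLog (μ (X ⁻¹' {e})).toReal

/-- Mutual information `I(X : Y)`. -/
noncomputable def mutInf {Ω E F : Type*} [MeasurableSpace Ω] [Fintype E] [Fintype F]
    (μ : Measure Ω) (X : Ω → E) (Y : Ω → F) : ℝ :=
  entH μ X + entH μ Y - entH μ (fun ω => (X ω, Y ω))

/-- Conditional Shannon entropy `H(X | Y)`. -/
noncomputable def condEnt {Ω E F : Type*} [MeasurableSpace Ω] [Fintype E] [Fintype F]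
    (μ : Measure Ω) (X : Ω → E) (Y : Ω → F) : ℝ :=
  entH μ (fun ω => (X ω, Y ω)) - entH μ Y

/-- Conditional mutual information `I(X : Y | Z)`. -/
noncomputable def condMutInf {Ω E F G : Type*} [MeasurableSpace Ω]
    [Fintype E] [Fintype F] [Fintype G]
    (μ : Measure Ω) (X : Ω → E) (Y : Ω → F) (Z : Ω → G) : ℝ :=
  entH μ (fun ω => (X ω, Z ω)) + entH μ (fun ω => (Y ω, Z ω))
    - entH μ (fun ω => (X ω, Y ω, Z ω)) - entH μ Z

/-!
Write `J` for the Ingleton expression of `A, B, C, D` and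
`d (X, Y) = I(B : Y | X) + I(X : B | Y)`. With `(X, Y)` either `(A, D)` or `(D, A)`, consider
`Q_n (X, Y; Z) = n (J + d (X, Z)) + I(X : Z | B) + n (n - 1) / 2 * d (X, Y)`;
Matúš's inequality is `0 ≤ Q_s (A, D; C)`. Replace `Z` by a copy with the same law jointly with
`(X, B)` which is conditionally independent of `(C, Y)` given `(X, B)`; this does not change
`Q_(n + 1) (X, Y; Z)`. For the copy, `d (Y, Z) ≤ d (X, Y) + d (X, Z)`, and a five-variable Shannon
inequality bounds `I(Y : Z | B) - I(X : Z | B)` by `J + (d (X, Z) + d (Y, Z) - d (X, Y)) / 2`.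
Together they give `Q_n (Y, X; Z) ≤ Q_(n + 1) (X, Y; Z)`, so after `n` steps, in which `A` and `D`
alternate, only `Q_0 = I(X : Z | B) ≥ 0` remains.
-/

section PartitionEntropy

variable {Ω E F : Type*}

/-- The entropy of the partition of `Ω` into the classes of `r`. Encoding a tuple of random
variables by the infimum of their kernels makes its entropy visibly independent of the order and
the bracketing of the tuple, so that Shannon identities reduce to linear arithmetic. -/
noncomputable def partitionEntropy [MeasurableSpace Ω] (μ : Measure Ω) (r : Setoid Ω) : ℝ :=
  ∑ᶠ s ∈ r.classes, Real.negMulLog (μ.real s)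

theorem entH_eq_partitionEntropy [MeasurableSpace Ω] [Fintype E] (μ : Measure Ω) (X : Ω → E) :
    entH μ X = partitionEntropy μ (Setoid.ker X) := by
  have classes_eq : (Setoid.ker X).classes = (fun e => X ⁻¹' {e}) '' Set.range X := by
    rw [← Set.range_comp]
    ext s
    simp only [Setoid.classes, Set.mem_ofPred_eq, Set.mem_range]
    exact exists_congr fun _ => eq_comm
  have injOn : Set.InjOn (fun e => X ⁻¹' {e}) (Set.range X) := by
    rintro _ ⟨ω, rfl⟩ e - h
    exact (Set.ext_iff.mp h ω).mp rfl
  rw [partitionEntropy, classes_eq, finsum_mem_image injOn, entH, ← finsum_eq_sum_of_fintype]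
  refine finsum_congr fun e => ?_
  by_cases he : e ∈ Set.range X
  · simp [he, Measure.real]
  · simp [he, Set.preimage_singleton_eq_empty.mpr he]

theorem ker_prodMk (X : Ω → E) (Y : Ω → F) :
    Setoid.ker (fun ω => (X ω, Y ω)) = Setoid.ker X ⊓ Setoid.ker Y := by
  ext; exact Prod.mk_inj

end PartitionEntropy

section Nonneg

open Real

theorem sum_mul_log_div_nonneg {ι : Type*} [Fintype ι] {p q : ι → ℝ} (hp : ∀ i, 0 ≤ p i)
    (hq : ∀ i, 0 ≤ q i) (hpq : ∀ i, q i = 0 → p i = 0) (hsum : ∑ i, q i ≤ ∑ i, p i) :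
    0 ≤ ∑ i, p i * log (p i / q i) := by
  have sub_le_mul_log (i : ι) : p i - q i ≤ p i * log (p i / q i) := by
    obtain hpi | hpi := (hp i).eq_or_lt
    · simpa [← hpi] using hq i
    have hqi : 0 < q i := (hq i).lt_of_ne' fun h => hpi.ne' (hpq i h)
    have := one_sub_inv_le_log_of_pos (div_pos hpi hqi)
    calc p i - q i = p i * (1 - (p i / q i)⁻¹) := by field_simp
      _ ≤ p i * log (p i / q i) := by gcongr
  calc (0 : ℝ) ≤ ∑ i, (p i - q i) := by rw [Finset.sum_sub_distrib]; linarith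
    _ ≤ ∑ i, p i * log (p i / q i) := Finset.sum_le_sum fun i _ => sub_le_mul_log i

theorem entH_comp_eq_neg_sum {Ω E F : Type*} [MeasurableSpace Ω] [Fintype E] [Fintype F]
    [MeasurableSpace E] [MeasurableSingletonClass E] {μ : Measure Ω} [IsFiniteMeasure μ] {X : Ω → E}
    (hX : Measurable X) (f : E → F) :
    entH μ (f ∘ X) = -∑ x, μ.real (X ⁻¹' {x}) * log (μ.real ((f ∘ X) ⁻¹' {f x})) := by
  classical
  have preimage (y : F) : μ.real ((f ∘ X) ⁻¹' {y}) = ∑ x with f x = y, μ.real (X ⁻¹' {x}) := by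
    rw [sum_measureReal_preimage_singleton _ fun x _ => hX (measurableSet_singleton x)]
    congr 1; ext; simp
  rw [entH, ← Finset.sum_neg_distrib, ← Finset.sum_fiberwise _ f]
  refine Finset.sum_congr rfl fun y _ => ?_
  change negMulLog (μ.real _) = _
  rw [negMulLog]
  nth_rewrite 1 [preimage]
  rw [neg_mul, Finset.sum_mul, ← Finset.sum_neg_distrib]
  refine Finset.sum_congr rfl fun x hx => ?_
  rw [(Finset.mem_filter.mp hx).2]

variable {Ω E F G : Type*} [MeasurableSpace Ω]

theorem sum_measureReal_preimage_prodMk [Fintype E] [MeasurableSpace E]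
    [MeasurableSingletonClass E] [MeasurableSpace G] [MeasurableSingletonClass G]
    {μ : Measure Ω} [IsFiniteMeasure μ] {X : Ω → E} {Z : Ω → G}
    (hX : Measurable X) (hZ : Measurable Z) (z : G) :
    ∑ x, μ.real ((fun ω => (X ω, Z ω)) ⁻¹' {(x, z)}) = μ.real (Z ⁻¹' {z}) := by
  have eq_iUnion : Z ⁻¹' {z} = ⋃ x, (fun ω => (X ω, Z ω)) ⁻¹' {(x, z)} := by
    ext; simp
  rw [eq_iUnion, measureReal_iUnion_fintype]
  · exact fun x y hxy => (Set.disjoint_singleton.mpr fun h => hxy (Prod.mk.inj h).1).preimage _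
  · exact fun x => (hX.prodMk hZ) (measurableSet_singleton _)

/-- The weights of the law on `E × F × G` under which `X` and `Y` are conditionally independent
given `Z`, while `(X, Z)` and `(Y, Z)` keep their laws under `μ`. Where `Z` has mass zero,
`0 / 0 = 0` gives the right weight. -/
noncomputable def condIndepWeight (μ : Measure Ω) (X : Ω → E) (Y : Ω → F) (Z : Ω → G)
    (a : E × F × G) : ℝ :=
  μ.real ((fun ω => (X ω, Z ω)) ⁻¹' {(a.1, a.2.2)}) * μ.real ((fun ω => (Y ω, Z ω)) ⁻¹' {a.2}) /
    μ.real (Z ⁻¹' {a.2.2})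

theorem condIndepWeight_nonneg (μ : Measure Ω) (X : Ω → E) (Y : Ω → F) (Z : Ω → G)
    (a : E × F × G) : 0 ≤ condIndepWeight μ X Y Z a := by
  unfold condIndepWeight
  positivity

variable {μ : Measure Ω} [IsFiniteMeasure μ] {X : Ω → E} {Y : Ω → F} {Z : Ω → G}

theorem measureReal_marginals_pos {x : E} {y : F} {z : G}
    (h : 0 < μ.real ((fun ω => (X ω, Y ω, Z ω)) ⁻¹' {(x, y, z)})) :
    0 < μ.real ((fun ω => (X ω, Z ω)) ⁻¹' {(x, z)}) ∧
      0 < μ.real ((fun ω => (Y ω, Z ω)) ⁻¹' {(y, z)}) ∧ 0 < μ.real (Z ⁻¹' {z}) := by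
  refine ⟨h.trans_le ?_, h.trans_le ?_, h.trans_le ?_⟩ <;>
    exact measureReal_mono fun ω hω => by simp_all

variable [MeasurableSpace G] [MeasurableSingletonClass G]

theorem sum_condIndepWeight_snd [Fintype F] [MeasurableSpace F]
    [MeasurableSingletonClass F] (hY : Measurable Y) (hZ : Measurable Z) (x : E) (z : G) :
    ∑ y, condIndepWeight μ X Y Z (x, y, z) = μ.real ((fun ω => (X ω, Z ω)) ⁻¹' {(x, z)}) := by
  simp only [condIndepWeight]
  rw [← Finset.sum_div, ← Finset.mul_sum, sum_measureReal_preimage_prodMk hY hZ]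
  refine mul_div_cancel_of_imp fun h => measureReal_mono_null (fun ω hω => ?_) h
  exact (Prod.mk.inj hω).2

theorem sum_condIndepWeight_fst [Fintype E] [MeasurableSpace E]
    [MeasurableSingletonClass E] (hX : Measurable X) (hZ : Measurable Z) (b : F × G) :
    ∑ x, condIndepWeight μ X Y Z (x, b) = μ.real ((fun ω => (Y ω, Z ω)) ⁻¹' {b}) := by
  simp only [condIndepWeight]
  rw [← Finset.sum_div, ← Finset.sum_mul, sum_measureReal_preimage_prodMk hX hZ]
  refine mul_div_cancel_left_of_imp fun h => measureReal_mono_null (fun ω hω => ?_) h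
  exact congrArg Prod.snd hω

variable [Fintype E] [Fintype F] [Fintype G] [MeasurableSpace E] [MeasurableSingletonClass E]
  [MeasurableSpace F] [MeasurableSingletonClass F]

theorem sum_condIndepWeight (hX : Measurable X) (hY : Measurable Y) (hZ : Measurable Z) :
    ∑ a, condIndepWeight μ X Y Z a = μ.real Set.univ := by
  rw [Fintype.sum_prod_type_right]
  simp only [sum_condIndepWeight_fst hX hZ]
  rw [sum_measureReal_preimage_singleton _ fun b _ => (hY.prodMk hZ) (measurableSet_singleton b),
    Finset.coe_univ, Set.preimage_univ]

theorem condMutInf_eq_sum_mul_log_div (hX : Measurable X) (hY : Measurable Y) (hZ : Measurable Z) :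
    condMutInf μ X Y Z = ∑ a, μ.real ((fun ω => (X ω, Y ω, Z ω)) ⁻¹' {a}) *
      log (μ.real ((fun ω => (X ω, Y ω, Z ω)) ⁻¹' {a}) / condIndepWeight μ X Y Z a) := by
  have hW : Measurable fun ω => (X ω, Y ω, Z ω) := hX.prodMk (hY.prodMk hZ)
  have hXZ := entH_comp_eq_neg_sum (μ := μ) hW fun a => (a.1, a.2.2)
  have hYZ := entH_comp_eq_neg_sum (μ := μ) hW Prod.snd
  have hXYZ := entH_comp_eq_neg_sum (μ := μ) hW id
  have hZ := entH_comp_eq_neg_sum (μ := μ) hW fun a => a.2.2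
  simp only [Function.comp_def, id_eq] at hXZ hYZ hXYZ hZ
  rw [condMutInf, hXZ, hYZ, hXYZ, hZ]
  simp only [← Finset.sum_neg_distrib, ← Finset.sum_add_distrib, ← Finset.sum_sub_distrib]
  refine Finset.sum_congr rfl fun ⟨x, y, z⟩ _ => ?_
  obtain h | h := (measureReal_nonneg (μ := μ)
    (s := (fun ω => (X ω, Y ω, Z ω)) ⁻¹' {(x, y, z)})).eq_or_lt
  · simp [← h]
  obtain ⟨hxz, hyz, hz⟩ := measureReal_marginals_pos h
  rw [condIndepWeight, log_div h.ne' (by positivity), log_div (by positivity) hz.ne',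
    log_mul hxz.ne' hyz.ne']
  ring

theorem condMutInf_nonneg (hX : Measurable X) (hY : Measurable Y) (hZ : Measurable Z) :
    0 ≤ condMutInf μ X Y Z := by
  rw [condMutInf_eq_sum_mul_log_div hX hY hZ]
  refine sum_mul_log_div_nonneg (fun _ => measureReal_nonneg) (condIndepWeight_nonneg μ X Y Z)
    (fun ⟨x, y, z⟩ hq => ?_) ?_
  · by_contra hp
    obtain ⟨hxz, hyz, hz⟩ := measureReal_marginals_pos (measureReal_nonneg.lt_of_ne' hp)
    exact (div_pos (mul_pos hxz hyz) hz).ne' hq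
  · rw [sum_condIndepWeight hX hY hZ, sum_measureReal_preimage_singleton _ fun a _ =>
      (hX.prodMk (hY.prodMk hZ)) (measurableSet_singleton a), Finset.coe_univ, Set.preimage_univ]

theorem condMutInf_eq_zero (hX : Measurable X) (hY : Measurable Y) (hZ : Measurable Z)
    (h : ∀ a, μ.real ((fun ω => (X ω, Y ω, Z ω)) ⁻¹' {a}) = condIndepWeight μ X Y Z a) :
    condMutInf μ X Y Z = 0 := by
  rw [condMutInf_eq_sum_mul_log_div hX hY hZ]
  refine Finset.sum_eq_zero fun a _ => ?_
  rw [← h a, mul_eq_zero, log_eq_zero, div_self_eq_one₀]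
  tauto

end Nonneg

section Shannon

variable {Ω E₁ E₂ E₃ E₄ E₅ : Type*} [MeasurableSpace Ω]
  [Fintype E₁] [Fintype E₂] [Fintype E₃] [Fintype E₄] [Fintype E₅]

/-- The Ingleton expression of four random variables, which is nonnegative for ranks of linear
subspaces but not for entropies; Matúš's inequalities bound it from below. -/
noncomputable def ingleton (μ : Measure Ω) (A : Ω → E₁) (B : Ω → E₂) (C : Ω → E₃) (D : Ω → E₄) :
    ℝ :=
  condMutInf μ A B C + condMutInf μ A B D + mutInf μ C D - mutInf μ A B

/-- The discrepancy `2 I(B : (X, Y)) - I(B : X) - I(B : Y)` between the information that `X` and `Y`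
carry about `B`, which plays the role of a distance between `X` and `Y`. -/
noncomputable def infoDist (μ : Measure Ω) (B : Ω → E₁) (X : Ω → E₂) (Y : Ω → E₃) : ℝ :=
  condMutInf μ B Y X + condMutInf μ X B Y

theorem infoDist_comm (μ : Measure Ω) (B : Ω → E₁) (X : Ω → E₂) (Y : Ω → E₃) :
    infoDist μ B X Y = infoDist μ B Y X := by
  simp only [infoDist, condMutInf, entH_eq_partitionEntropy, ker_prodMk, inf_comm, inf_left_comm,
    inf_assoc]
  ring

theorem condMutInf_prodMk (μ : Measure Ω) (X : Ω → E₁) (Y : Ω → E₂) (Z : Ω → E₃) (W : Ω → E₄) :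
    condMutInf μ (fun ω => (X ω, Y ω)) Z W =
      condMutInf μ X Z W + condMutInf μ Y Z (fun ω => (X ω, W ω)) := by
  simp only [condMutInf, entH_eq_partitionEntropy, ker_prodMk, inf_left_comm, inf_assoc]
  ring

theorem condMutInf_prodMk_comm (μ : Measure Ω) (X : Ω → E₁) (Y : Ω → E₂) (Z : Ω → E₃)
    (W : Ω → E₄) :
    condMutInf μ (fun ω => (X ω, Y ω)) Z W = condMutInf μ (fun ω => (Y ω, X ω)) Z W := by
  simp only [condMutInf, entH_eq_partitionEntropy, ker_prodMk, inf_comm]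

variable [MeasurableSpace E₁] [MeasurableSingletonClass E₁]
  [MeasurableSpace E₂] [MeasurableSingletonClass E₂] [MeasurableSpace E₃]
  [MeasurableSingletonClass E₃] [MeasurableSpace E₄] [MeasurableSingletonClass E₄]
  [MeasurableSpace E₅] [MeasurableSingletonClass E₅] {μ : Measure Ω} [IsFiniteMeasure μ]

theorem condMutInf_snd_eq_zero {X : Ω → E₁} {Y : Ω → E₂} {Z : Ω → E₃} {W : Ω → E₄}
    (hX : Measurable X) (hY : Measurable Y) (hZ : Measurable Z) (hW : Measurable W)
    (h : condMutInf μ (fun ω => (X ω, Y ω)) Z W = 0) : condMutInf μ Y Z W = 0 := by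
  rw [condMutInf_prodMk_comm, condMutInf_prodMk] at h
  have := condMutInf_nonneg (μ := μ) hY hZ hW
  have := condMutInf_nonneg (μ := μ) hX hZ (hY.prodMk hW)
  linarith

theorem infoDist_triangle {B : Ω → E₁} {X : Ω → E₂} {Y : Ω → E₃} {Z : Ω → E₄} (hB : Measurable B)
    (hX : Measurable X) (hY : Measurable Y) (hZ : Measurable Z)
    (hXZ : condMutInf μ X Z (fun ω => (Y ω, B ω)) = 0) :
    infoDist μ B X Z ≤ infoDist μ B X Y + infoDist μ B Y Z := by
  have defect : infoDist μ B X Y + infoDist μ B Y Z - infoDist μ B X Z =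
      2 * (condMutInf μ B Y (fun ω => (X ω, Z ω)) + condMutInf μ X Z Y -
        condMutInf μ X Z (fun ω => (Y ω, B ω))) := by
    simp only [infoDist, condMutInf, entH_eq_partitionEntropy, ker_prodMk, inf_comm, inf_left_comm,
      inf_assoc]
    ring
  have := condMutInf_nonneg (μ := μ) hB hY (hX.prodMk hZ)
  have := condMutInf_nonneg (μ := μ) hX hZ hY
  linarith

theorem condMutInf_add_condMutInf_le {A : Ω → E₁} {B : Ω → E₂} {C : Ω → E₃} {D : Ω → E₄}
    {Z : Ω → E₅} (hA : Measurable A) (hB : Measurable B) (hC : Measurable C) (hD : Measurable D)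
    (hZ : Measurable Z) :
    condMutInf μ A Z B + condMutInf μ D Z B ≤ ingleton μ A B C D +
      (infoDist μ B A Z + infoDist μ B D Z - infoDist μ B A D) / 2 +
      2 * condMutInf μ (fun ω => (A ω, C ω, D ω)) Z B := by
  have slack : ingleton μ A B C D + (infoDist μ B A Z + infoDist μ B D Z - infoDist μ B A D) / 2 +
      2 * condMutInf μ (fun ω => (A ω, C ω, D ω)) Z B - (condMutInf μ A Z B + condMutInf μ D Z B) =
      condMutInf μ A B (fun ω => (C ω, Z ω)) + condMutInf μ C D Z + condMutInf μ C Z A +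
      condMutInf μ C Z B + condMutInf μ (fun ω => (A ω, B ω)) Z (fun ω => (C ω, D ω)) +
      condMutInf μ D Z (fun ω => (A ω, B ω, C ω)) := by
    simp only [ingleton, infoDist, condMutInf, mutInf, entH_eq_partitionEntropy, ker_prodMk,
      inf_comm, inf_left_comm, inf_assoc]
    ring
  have := condMutInf_nonneg (μ := μ) hA hB (hC.prodMk hZ)
  have := condMutInf_nonneg (μ := μ) hC hD hZ
  have := condMutInf_nonneg (μ := μ) hC hZ hA
  have := condMutInf_nonneg (μ := μ) hC hZ hB
  have := condMutInf_nonneg (μ := μ) (hA.prodMk hB) hZ (hC.prodMk hD)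
  have := condMutInf_nonneg (μ := μ) hD hZ (hA.prodMk (hB.prodMk hC))
  linarith

theorem condMutInf_le_of_condIndep_left {A : Ω → E₁} {B : Ω → E₂} {C : Ω → E₃} {D : Ω → E₄}
    {Z : Ω → E₅} (hA : Measurable A) (hB : Measurable B) (hC : Measurable C) (hD : Measurable D)
    (hZ : Measurable Z)
    (h : condMutInf μ (fun ω => (C ω, D ω)) Z (fun ω => (A ω, B ω)) = 0) :
    condMutInf μ D Z B ≤ ingleton μ A B C D +
      (infoDist μ B A Z + infoDist μ B D Z - infoDist μ B A D) / 2 + condMutInf μ A Z B := by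
  have key := condMutInf_add_condMutInf_le (μ := μ) hA hB hC hD hZ
  rw [condMutInf_prodMk, h] at key
  linarith

theorem condMutInf_le_of_condIndep_right {A : Ω → E₁} {B : Ω → E₂} {C : Ω → E₃} {D : Ω → E₄}
    {Z : Ω → E₅} (hA : Measurable A) (hB : Measurable B) (hC : Measurable C) (hD : Measurable D)
    (hZ : Measurable Z)
    (h : condMutInf μ (fun ω => (C ω, A ω)) Z (fun ω => (D ω, B ω)) = 0) :
    condMutInf μ A Z B ≤ ingleton μ A B C D +
      (infoDist μ B D Z + infoDist μ B A Z - infoDist μ B D A) / 2 + condMutInf μ D Z B := by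
  have key := condMutInf_add_condMutInf_le (μ := μ) hA hB hC hD hZ
  have reorder : condMutInf μ (fun ω => (A ω, C ω, D ω)) Z B =
      condMutInf μ (fun ω => (D ω, C ω, A ω)) Z B := by
    simp only [condMutInf, entH_eq_partitionEntropy, ker_prodMk, inf_comm, inf_left_comm,
      inf_assoc]
  rw [reorder, condMutInf_prodMk, h, infoDist_comm μ B A D] at key
  linarith

end Shannon

section Law

variable {Ω Ω' α E F G H : Type*} [MeasurableSpace Ω] [MeasurableSpace Ω'] [Fintype E] [Fintype F]
  [Fintype G] [Fintype H] [MeasurableSpace α] [DiscreteMeasurableSpace α]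
  {μ : Measure Ω} {ν : Measure Ω'} {T : Ω → α} {T' : Ω' → α}

theorem entH_eq_of_identDistrib (h : IdentDistrib T T' μ ν) (f : α → E) :
    entH μ (fun ω => f (T ω)) = entH ν (fun ω => f (T' ω)) :=
  Finset.sum_congr rfl fun e _ => congrArg (fun x => Real.negMulLog x.toReal)
    (h.measure_mem_eq (MeasurableSet.of_discrete (s := f ⁻¹' {e})))

theorem mutInf_eq_of_identDistrib (h : IdentDistrib T T' μ ν) (f : α → E) (g : α → F) :
    mutInf μ (fun ω => f (T ω)) (fun ω => g (T ω)) =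
      mutInf ν (fun ω => f (T' ω)) (fun ω => g (T' ω)) := by
  rw [mutInf, entH_eq_of_identDistrib h f, entH_eq_of_identDistrib h g,
    entH_eq_of_identDistrib h fun a => (f a, g a), mutInf]

theorem condMutInf_eq_of_identDistrib (h : IdentDistrib T T' μ ν) (f : α → E) (g : α → F)
    (k : α → G) :
    condMutInf μ (fun ω => f (T ω)) (fun ω => g (T ω)) (fun ω => k (T ω)) =
      condMutInf ν (fun ω => f (T' ω)) (fun ω => g (T' ω)) (fun ω => k (T' ω)) := by
  rw [condMutInf, entH_eq_of_identDistrib h fun a => (f a, k a),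
    entH_eq_of_identDistrib h fun a => (g a, k a),
    entH_eq_of_identDistrib h fun a => (f a, g a, k a), entH_eq_of_identDistrib h k, condMutInf]

theorem infoDist_eq_of_identDistrib (h : IdentDistrib T T' μ ν) (f : α → E) (g : α → F)
    (k : α → G) :
    infoDist μ (fun ω => f (T ω)) (fun ω => g (T ω)) (fun ω => k (T ω)) =
      infoDist ν (fun ω => f (T' ω)) (fun ω => g (T' ω)) (fun ω => k (T' ω)) := by
  rw [infoDist, condMutInf_eq_of_identDistrib h, condMutInf_eq_of_identDistrib h, infoDist]

theorem ingleton_eq_of_identDistrib (h : IdentDistrib T T' μ ν) (f : α → E) (g : α → F) (k : α → G)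
    (l : α → H) :
    ingleton μ (fun ω => f (T ω)) (fun ω => g (T ω)) (fun ω => k (T ω)) (fun ω => l (T ω)) =
      ingleton ν (fun ω => f (T' ω)) (fun ω => g (T' ω)) (fun ω => k (T' ω))
        (fun ω => l (T' ω)) := by
  rw [ingleton, condMutInf_eq_of_identDistrib h, condMutInf_eq_of_identDistrib h,
    mutInf_eq_of_identDistrib h, mutInf_eq_of_identDistrib h, ingleton]

end Law

section Coupling

theorem exists_measureReal_singleton_eq {α : Type*} [Finite α] [MeasurableSpace α]
    [MeasurableSingletonClass α] {w : α → ℝ} (hw : ∀ a, 0 ≤ w a) :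
    ∃ ν : Measure α, IsFiniteMeasure ν ∧ ∀ a, ν.real {a} = w a := by
  classical
  have := Fintype.ofFinite α
  refine ⟨∑ a, (w a).toNNReal • Measure.dirac a, inferInstance, fun a => ?_⟩
  simp [measureReal_def, Set.indicator, Finset.sum_apply, hw]

theorem identDistrib_of_measureReal_preimage_singleton {Ω Ω' α : Type*} [MeasurableSpace Ω]
    [MeasurableSpace Ω'] [Countable α] [MeasurableSpace α] [MeasurableSingletonClass α]
    {μ : Measure Ω} [IsFiniteMeasure μ] {ν : Measure Ω'} [IsFiniteMeasure ν] {T : Ω → α}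
    {T' : Ω' → α} (hT : Measurable T) (hT' : Measurable T')
    (h : ∀ a, μ.real (T ⁻¹' {a}) = ν.real (T' ⁻¹' {a})) : IdentDistrib T T' μ ν := by
  refine ⟨hT.aemeasurable, hT'.aemeasurable, Measure.ext_of_measureReal_singleton fun a => ?_⟩
  rw [map_measureReal_apply hT (measurableSet_singleton a),
    map_measureReal_apply hT' (measurableSet_singleton a), h]

theorem exists_condIndep_coupling {Ω E F G : Type*} [MeasurableSpace Ω] [Fintype E] [Fintype F]
    [Fintype G] [MeasurableSpace E] [MeasurableSingletonClass E] [MeasurableSpace F]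
    [MeasurableSingletonClass F] [MeasurableSpace G] [MeasurableSingletonClass G]
    {μ : Measure Ω} [IsFiniteMeasure μ] {X : Ω → E} {Y : Ω → F} {Z : Ω → G}
    (hX : Measurable X) (hY : Measurable Y) (hZ : Measurable Z) :
    ∃ ν : Measure (E × F × G), IsFiniteMeasure ν ∧
      IdentDistrib (fun a => (a.1, a.2.2)) (fun ω => (X ω, Z ω)) ν μ ∧
      IdentDistrib (fun a => a.2) (fun ω => (Y ω, Z ω)) ν μ ∧
      condMutInf ν (fun a => a.1) (fun a => a.2.1) (fun a => a.2.2) = 0 := by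
  obtain ⟨ν, _, hν⟩ := exists_measureReal_singleton_eq (condIndepWeight_nonneg μ X Y Z)
  have law_XZ (b : E × G) : ν.real ((fun a => (a.1, a.2.2)) ⁻¹' {b}) =
      μ.real ((fun ω => (X ω, Z ω)) ⁻¹' {b}) := by
    rw [← sum_measureReal_preimage_prodMk (X := fun a : E × F × G => a.2.1) (by fun_prop)
      (by fun_prop), ← sum_condIndepWeight_snd hY hZ]
    refine Finset.sum_congr rfl fun y _ => (congrArg ν.real ?_).trans (hν _)
    ext; simp only [Set.mem_preimage, Set.mem_singleton_iff, Prod.ext_iff]; tauto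
  have law_YZ (b : F × G) : ν.real ((fun a => a.2) ⁻¹' {b}) =
      μ.real ((fun ω => (Y ω, Z ω)) ⁻¹' {b}) := by
    rw [← sum_measureReal_preimage_prodMk (X := fun a : E × F × G => a.1) (by fun_prop)
      (by fun_prop), ← sum_condIndepWeight_fst hX hZ]
    exact Finset.sum_congr rfl fun x _ => hν _
  have law_Z (z : G) : ν.real ((fun a => a.2.2) ⁻¹' {z}) = μ.real (Z ⁻¹' {z}) := by
    rw [← sum_measureReal_preimage_prodMk (X := fun a : E × F × G => a.1) (by fun_prop)
      (by fun_prop), ← sum_measureReal_preimage_prodMk hX hZ]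
    exact Finset.sum_congr rfl fun x _ => law_XZ _
  refine ⟨ν, inferInstance,
    identDistrib_of_measureReal_preimage_singleton (by fun_prop) (hX.prodMk hZ) law_XZ,
    identDistrib_of_measureReal_preimage_singleton (by fun_prop) (hY.prodMk hZ) law_YZ,
    condMutInf_eq_zero (by fun_prop) (by fun_prop) (by fun_prop) fun a => (hν a).trans ?_⟩
  simp only [condIndepWeight, law_XZ, law_Z]
  rw [← law_YZ]

end Coupling

section Matus

universe u₁ u₂ u₃ u₄ u₅

variable {Ω Ω' : Type*} {E₁ : Type u₁} {E₂ : Type u₂} {E₃ : Type u₃} {E₄ : Type u₄} {E₅ : Type u₅}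
  [MeasurableSpace Ω] [MeasurableSpace Ω']
  [Fintype E₁] [Fintype E₂] [Fintype E₃] [Fintype E₄] [Fintype E₅]

/-- The functional of Matúš's second inequality for `j = ingleton μ A B C D` and `{X, Y} = {A, D}`,
with an auxiliary variable `Z` in the place of `C`. The induction on `n` modifies `Z` and exchanges
`X` and `Y`. -/
noncomputable def matusFunctional (μ : Measure Ω) (j : ℝ) (B : Ω → E₁) (X : Ω → E₂) (Y : Ω → E₃)
    (Z : Ω → E₄) (n : ℕ) : ℝ :=
  n * (j + infoDist μ B X Z) + condMutInf μ X Z B + n * (n - 1) / 2 * infoDist μ B X Y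

variable [MeasurableSpace E₁] [MeasurableSingletonClass E₁]
  [MeasurableSpace E₂] [MeasurableSingletonClass E₂] [MeasurableSpace E₃]
  [MeasurableSingletonClass E₃] [MeasurableSpace E₄] [MeasurableSingletonClass E₄]

theorem matusFunctional_eq_of_identDistrib {μ : Measure Ω} {ν : Measure Ω'} {B : Ω → E₁}
    {X : Ω → E₂} {Y : Ω → E₃} {Z : Ω → E₄} {B' : Ω' → E₁} {X' : Ω' → E₂} {Y' : Ω' → E₃}
    {Z' : Ω' → E₄}
    (hY : IdentDistrib (fun ω => (X ω, B ω, Y ω)) (fun ω => (X' ω, B' ω, Y' ω)) μ ν)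
    (hZ : IdentDistrib (fun ω => (X ω, B ω, Z ω)) (fun ω => (X' ω, B' ω, Z' ω)) μ ν)
    (j : ℝ) (n : ℕ) :
    matusFunctional μ j B X Y Z n = matusFunctional ν j B' X' Y' Z' n := by
  rw [matusFunctional, infoDist_eq_of_identDistrib hZ (·.2.1) (·.1) (·.2.2),
    condMutInf_eq_of_identDistrib hZ (·.1) (·.2.2) (·.2.1),
    infoDist_eq_of_identDistrib hY (·.2.1) (·.1) (·.2.2), matusFunctional]

variable [MeasurableSpace E₅] [MeasurableSingletonClass E₅] {μ : Measure Ω} [IsFiniteMeasure μ]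

theorem matusFunctional_le_succ {B : Ω → E₁} {X : Ω → E₂} {Y : Ω → E₃} {Z : Ω → E₄}
    (hB : Measurable B) (hX : Measurable X) (hY : Measurable Y) (hZ : Measurable Z) {j : ℝ}
    (hYZ : condMutInf μ Y Z (fun ω => (X ω, B ω)) = 0)
    (hj : condMutInf μ Y Z B ≤
      j + (infoDist μ B X Z + infoDist μ B Y Z - infoDist μ B X Y) / 2 + condMutInf μ X Z B)
    (n : ℕ) :
    matusFunctional μ j B Y X Z n ≤ matusFunctional μ j B X Y Z (n + 1) := by
  have triangle := infoDist_triangle hB hY hX hZ hYZ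
  have hn := mul_le_mul_of_nonneg_left triangle (by positivity : (0 : ℝ) ≤ n + 1 / 2)
  rw [infoDist_comm μ B Y X] at hn
  rw [matusFunctional, matusFunctional, infoDist_comm μ B Y X]
  push_cast
  linarith

theorem exists_condIndep_copy {X : Ω → E₁} {B : Ω → E₂} {C : Ω → E₃} {Y : Ω → E₄} {Z : Ω → E₅}
    (hX : Measurable X) (hB : Measurable B) (hC : Measurable C) (hY : Measurable Y)
    (hZ : Measurable Z) :
    ∃ (ν : Measure ((E₃ × E₄) × E₅ × E₁ × E₂)) (X' : _ → E₁) (B' : _ → E₂) (C' : _ → E₃)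
      (Y' : _ → E₄) (Z' : _ → E₅), IsFiniteMeasure ν ∧
      IdentDistrib (fun ω => (X' ω, B' ω, C' ω, Y' ω)) (fun ω => (X ω, B ω, C ω, Y ω)) ν μ ∧
      IdentDistrib (fun ω => (X' ω, B' ω, Z' ω)) (fun ω => (X ω, B ω, Z ω)) ν μ ∧
      condMutInf ν (fun ω => (C' ω, Y' ω)) Z' (fun ω => (X' ω, B' ω)) = 0 := by
  obtain ⟨ν, hν, law, lawZ, condIndep⟩ :=
    exists_condIndep_coupling (μ := μ) (hC.prodMk hY) hZ (hX.prodMk hB)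
  exact ⟨ν, (·.2.2.1), (·.2.2.2), (·.1.1), (·.1.2), (·.2.1), hν,
    law.comp (u := fun a => (a.2.1, a.2.2, a.1.1, a.1.2)) (by fun_prop),
    lawZ.comp (u := fun a => (a.2.1, a.2.2, a.1)) (by fun_prop), condIndep⟩

theorem exists_matusFunctional_swap_le_succ {A : Ω → E₁} {B : Ω → E₂} {C : Ω → E₃} {D : Ω → E₄}
    {Z : Ω → E₅} (hA : Measurable A) (hB : Measurable B) (hC : Measurable C) (hD : Measurable D)
    (hZ : Measurable Z) :
    ∃ (ν : Measure ((E₃ × E₄) × E₅ × E₁ × E₂)) (A' : _ → E₁) (B' : _ → E₂) (C' : _ → E₃)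
      (D' : _ → E₄) (Z' : _ → E₅), IsFiniteMeasure ν ∧ ∀ n,
      matusFunctional ν (ingleton ν A' B' C' D') B' D' A' Z' n ≤
        matusFunctional μ (ingleton μ A B C D) B A D Z (n + 1) := by
  obtain ⟨ν, A', B', C', D', Z', hν, law, lawZ, condIndep⟩ :=
    exists_condIndep_copy (μ := μ) hA hB hC hD hZ
  refine ⟨ν, A', B', C', D', Z', hν, fun n => ?_⟩
  rw [← ingleton_eq_of_identDistrib law (·.1) (·.2.1) (·.2.2.1) (·.2.2.2),
    ← matusFunctional_eq_of_identDistrib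
      (law.comp (u := fun a => (a.1, a.2.1, a.2.2.2)) (by fun_prop)) lawZ]
  exact matusFunctional_le_succ .of_discrete .of_discrete .of_discrete .of_discrete
    (condMutInf_snd_eq_zero .of_discrete .of_discrete .of_discrete .of_discrete condIndep)
    (condMutInf_le_of_condIndep_left .of_discrete .of_discrete .of_discrete .of_discrete
      .of_discrete condIndep) n

theorem exists_matusFunctional_le_swap_succ {A : Ω → E₁} {B : Ω → E₂} {C : Ω → E₃} {D : Ω → E₄}
    {Z : Ω → E₅} (hA : Measurable A) (hB : Measurable B) (hC : Measurable C) (hD : Measurable D)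
    (hZ : Measurable Z) :
    ∃ (ν : Measure ((E₃ × E₁) × E₅ × E₄ × E₂)) (A' : _ → E₁) (B' : _ → E₂) (C' : _ → E₃)
      (D' : _ → E₄) (Z' : _ → E₅), IsFiniteMeasure ν ∧ ∀ n,
      matusFunctional ν (ingleton ν A' B' C' D') B' A' D' Z' n ≤
        matusFunctional μ (ingleton μ A B C D) B D A Z (n + 1) := by
  obtain ⟨ν, D', B', C', A', Z', hν, law, lawZ, condIndep⟩ :=
    exists_condIndep_copy (μ := μ) hD hB hC hA hZ
  refine ⟨ν, A', B', C', D', Z', hν, fun n => ?_⟩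
  rw [← ingleton_eq_of_identDistrib law (·.2.2.2) (·.2.1) (·.2.2.1) (·.1),
    ← matusFunctional_eq_of_identDistrib
      (law.comp (u := fun a => (a.1, a.2.1, a.2.2.2)) (by fun_prop)) lawZ]
  exact matusFunctional_le_succ .of_discrete .of_discrete .of_discrete .of_discrete
    (condMutInf_snd_eq_zero .of_discrete .of_discrete .of_discrete .of_discrete condIndep)
    (condMutInf_le_of_condIndep_right .of_discrete .of_discrete .of_discrete .of_discrete
      .of_discrete condIndep) n

theorem matusFunctional_nonneg_and_swap (n : ℕ) :
    ∀ {Ω : Type max u₁ u₂ u₃ u₄ u₅} [MeasurableSpace Ω] (μ : Measure Ω) [IsFiniteMeasure μ]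
      {A : Ω → E₁} {B : Ω → E₂} {C : Ω → E₃} {D : Ω → E₄} {Z : Ω → E₅}, Measurable A →
      Measurable B → Measurable C → Measurable D → Measurable Z →
      0 ≤ matusFunctional μ (ingleton μ A B C D) B A D Z n ∧
      0 ≤ matusFunctional μ (ingleton μ A B C D) B D A Z n := by
  induction n with
  | zero =>
    intro Ω _ μ _ A B C D Z hA hB _ hD hZ
    simp [matusFunctional, condMutInf_nonneg, hA, hB, hD, hZ]
  | succ n ih =>
    intro Ω _ μ _ A B C D Z hA hB hC hD hZ
    constructor
    · obtain ⟨ν, A', B', C', D', Z', _, hν⟩ :=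
        exists_matusFunctional_swap_le_succ (μ := μ) hA hB hC hD hZ
      exact (ih ν .of_discrete .of_discrete .of_discrete .of_discrete .of_discrete).2.trans (hν n)
    · obtain ⟨ν, A', B', C', D', Z', _, hν⟩ :=
        exists_matusFunctional_le_swap_succ (μ := μ) hA hB hC hD hZ
      exact (ih ν .of_discrete .of_discrete .of_discrete .of_discrete .of_discrete).1.trans (hν n)

theorem matus_inequality_two_general {A : Ω → E₁} {B : Ω → E₂} {C : Ω → E₃} {D : Ω → E₄}
    {Z : Ω → E₅} (hA : Measurable A) (hB : Measurable B) (hC : Measurable C) (hD : Measurable D)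
    (hZ : Measurable Z) (n : ℕ) :
    0 ≤ n * (ingleton μ A B C D + infoDist μ B A Z) + condMutInf μ A Z B +
      n * (n - 1) / 2 * infoDist μ B A D := by
  cases n with
  | zero => simpa using condMutInf_nonneg hA hZ hB
  | succ n =>
    -- One step moves from `Ω`, of arbitrary universe, to the universe that the copying preserves.
    obtain ⟨ν, A', B', C', D', Z', _, hν⟩ :=
      exists_matusFunctional_swap_le_succ (μ := μ) hA hB hC hD hZ
    exact (matusFunctional_nonneg_and_swap n ν .of_discrete .of_discrete .of_discrete .of_discrete
      .of_discrete).2.trans (hν n)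

end Matus

/-- **Second Matúš inequality family** for four jointly distributed finite random
variables and any natural number `s ≥ 1`. -/
theorem matus_inequality_two {Ω E1 E2 E3 E4 : Type*} [MeasurableSpace Ω]
    [Fintype E1] [Fintype E2] [Fintype E3] [Fintype E4]
    [MeasurableSpace E1] [MeasurableSingletonClass E1]
    [MeasurableSpace E2] [MeasurableSingletonClass E2]
    [MeasurableSpace E3] [MeasurableSingletonClass E3]
    [MeasurableSpace E4] [MeasurableSingletonClass E4]
    (μ : Measure Ω) [IsProbabilityMeasure μ]
    (X1 : Ω → E1) (X2 : Ω → E2) (X3 : Ω → E3) (X4 : Ω → E4)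
    (hX1 : Measurable X1) (hX2 : Measurable X2) (hX3 : Measurable X3) (hX4 : Measurable X4)
    (s : ℕ) (hs : 1 ≤ s) :
    0 ≤ (s : ℝ) * (condMutInf μ X2 X3 X1 + 2 * condMutInf μ X1 X2 X3
          + condMutInf μ X1 X2 X4 + mutInf μ X3 X4 - mutInf μ X1 X2)
      + condMutInf μ X1 X3 X2
      + ((s : ℝ) * ((s : ℝ) - 1) / 2) * (condMutInf μ X2 X4 X1 + condMutInf μ X1 X2 X4) := by
  have h := matus_inequality_two_general (μ := μ) hX1 hX2 hX3 hX4 hX3 s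
  rw [ingleton, infoDist, infoDist] at h
  linarith
end

section
/- Entropy inequality for the classical triangle scenario: let A, B, C be mutually independent finite random variables and let X = f(B, C), Y = g(A, C), Z = h(A, B) for deterministic functions f, g, h. Then I(X:Y) + I(X:Z) ≤ H(X), where I denotes mutual information and H the Shannon entropy. -/
open MeasureTheory ProbabilityTheory

/-!
The chain rule gives `I(X:Y) ≤ I(X:C) + I(X:Y|C)` and `I(X:Z) ≤ I(X:B) + I(X:Z|B)`, while
`I(X:B) + I(X:C) ≤ I(X:(B,C)) + I(B:C) ≤ H(X) + I(B:C)`. In the triangle scenario the error terms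
`I(B:C)`, `I(X:Y|C) ≤ I(B:A|C)` and `I(X:Z|B) ≤ I(C:A|B)` all vanish: the bounds
are summands of the total correlation
`I(B:A|C) + I(B:C) + I(A:C) = H(A) + H(B) + H(C) - H(A,B,C) = 0`, or of its analogue with `B` and
`C` exchanged. The only analytic input is Gibbs' inequality, in the form of the nonnegativity of
conditional mutual information.
-/

lemma mul_log_mul_div_le {p a b m : ℝ} (hp : 0 ≤ p) (ha : p ≤ a) (hb : p ≤ b) (hm : p ≤ m) :
    p * (Real.log a + Real.log b - Real.log m) ≤ p * Real.log p + (a * b / m - p) := by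
  obtain rfl | hp := hp.eq_or_lt
  · simpa using div_nonneg (mul_nonneg ha hb) hm
  have ha := hp.trans_le ha
  have hb := hp.trans_le hb
  have hm := hp.trans_le hm
  have hlog : Real.log a + Real.log b - Real.log m - Real.log p ≤ a * b / m / p - 1 := by
    rw [← Real.log_mul ha.ne' hb.ne', ← Real.log_div (by positivity) hm.ne',
      ← Real.log_div (by positivity) hp.ne']
    exact Real.log_le_sub_one_of_pos (by positivity)
  calc p * (Real.log a + Real.log b - Real.log m)
      = p * Real.log p + p * (Real.log a + Real.log b - Real.log m - Real.log p) := by ring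
    _ ≤ p * Real.log p + p * (a * b / m / p - 1) := by gcongr
    _ = p * Real.log p + (a * b / m - p) := by field_simp

/-- Gibbs' inequality, comparing `p` with the product of its marginals divided by its total mass. -/
lemma sum_negMulLog_add_negMulLog_sum_le {ι κ : Type*} [Fintype ι] [Fintype κ] {p : ι → κ → ℝ}
    (hp : ∀ i j, 0 ≤ p i j) :
    ∑ i, ∑ j, Real.negMulLog (p i j) + Real.negMulLog (∑ i, ∑ j, p i j) ≤
      ∑ i, Real.negMulLog (∑ j, p i j) + ∑ j, Real.negMulLog (∑ i, p i j) := by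
  set r : ι → ℝ := fun i => ∑ j, p i j
  set c : κ → ℝ := fun j => ∑ i, p i j
  set m : ℝ := ∑ i, r i
  have hcm : ∑ j, c j = m := Finset.sum_comm
  have hpr (i j) : p i j ≤ r i := Finset.single_le_sum (fun j _ => hp i j) (Finset.mem_univ j)
  have hpc (i j) : p i j ≤ c j :=
    Finset.single_le_sum (f := fun i => p i j) (fun i _ => hp i j) (Finset.mem_univ i)
  have hrm (i) : r i ≤ m :=
    Finset.single_le_sum (fun i _ => Finset.sum_nonneg fun j _ => hp i j) (Finset.mem_univ i)
  have hcross : ∑ i, ∑ j, p i j * (Real.log (r i) + Real.log (c j) - Real.log m) =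
      ∑ i, r i * Real.log (r i) + ∑ j, c j * Real.log (c j) - m * Real.log m := by
    have hc : ∑ i, ∑ j, p i j * Real.log (c j) = ∑ j, c j * Real.log (c j) := by
      rw [Finset.sum_comm]
      simp only [← Finset.sum_mul, c]
    simp only [mul_sub, mul_add, Finset.sum_sub_distrib, Finset.sum_add_distrib, hc]
    simp only [← Finset.sum_mul, r, m]
  have hmass : ∑ i, ∑ j, (r i * c j / m - p i j) = 0 := by
    simp only [Finset.sum_sub_distrib, ← Finset.sum_div, ← Finset.mul_sum, ← Finset.sum_mul, hcm]
    exact sub_eq_zero.2 (mul_self_div_self m)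
  have hgibbs : ∑ i, ∑ j, p i j * (Real.log (r i) + Real.log (c j) - Real.log m) ≤
      ∑ i, ∑ j, (p i j * Real.log (p i j) + (r i * c j / m - p i j)) := by
    gcongr with i _ j _
    exact mul_log_mul_div_le (hp i j) (hpr i j) (hpc i j) ((hpr i j).trans (hrm i))
  simp only [hcross, Finset.sum_add_distrib, hmass] at hgibbs
  simp only [Real.negMulLog, neg_mul, Finset.sum_neg_distrib]
  linarith

section Entropy

-- Entropy involves no σ-algebra on the alphabet, so random variables are only required to have
-- measurable fibres.
variable {Ω E F G : Type*} [MeasurableSpace Ω] {μ : Measure Ω}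

lemma measurableSet_preimage_singleton_comp₂ [Countable E] [Countable F] {U : Ω → E} {V : Ω → F}
    (hU : ∀ u, MeasurableSet (U ⁻¹' {u})) (hV : ∀ v, MeasurableSet (V ⁻¹' {v}))
    (k : E → F → G) (x : G) : MeasurableSet ((fun ω => k (U ω) (V ω)) ⁻¹' {x}) := by
  have h : (fun ω => k (U ω) (V ω)) ⁻¹' {x} =
      ⋃ z ∈ {z : E × F | k z.1 z.2 = x}, U ⁻¹' {z.1} ∩ V ⁻¹' {z.2} := by
    ext ω
    simp
  rw [h]
  exact MeasurableSet.biUnion (Set.to_countable _) fun z _ => (hU z.1).inter (hV z.2)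

variable [Fintype E] [Fintype F] [Fintype G]

lemma sum_measureReal_preimage_singleton_inter [IsFiniteMeasure μ] {U : Ω → E}
    (hU : ∀ u, MeasurableSet (U ⁻¹' {u})) (s : Set Ω) :
    ∑ u, μ.real (U ⁻¹' {u} ∩ s) = μ.real s := by
  have h := sum_measureReal_preimage_singleton (μ := μ.restrict s) Finset.univ fun u _ => hU u
  simpa [measureReal_restrict_apply (hU _)] using h

lemma sum_measureReal_preimage_singleton_eq_one [IsProbabilityMeasure μ] {U : Ω → E}
    (hU : ∀ u, MeasurableSet (U ⁻¹' {u})) : ∑ u, μ.real (U ⁻¹' {u}) = 1 := by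
  simpa using sum_measureReal_preimage_singleton_inter (μ := μ) hU Set.univ

lemma entH_prodMk (U : Ω → E) (V : Ω → F) :
    entH μ (fun ω => (U ω, V ω)) =
      ∑ v, ∑ u, Real.negMulLog (μ.real (U ⁻¹' {u} ∩ V ⁻¹' {v})) := by
  rw [entH, Fintype.sum_prod_type_right]
  simp only [← Set.singleton_prod_singleton, Set.mk_preimage_prod, measureReal_def]

lemma entH_prodMk_prodMk (U : Ω → E) (V : Ω → F) (W : Ω → G) :
    entH μ (fun ω => (U ω, V ω, W ω)) =
      ∑ w, ∑ u, ∑ v, Real.negMulLog (μ.real (U ⁻¹' {u} ∩ (V ⁻¹' {v} ∩ W ⁻¹' {w}))) := by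
  rw [entH, Fintype.sum_prod_type]
  simp only [Fintype.sum_prod_type_right, ← Set.singleton_prod_singleton, Set.mk_preimage_prod,
    measureReal_def]
  exact Finset.sum_comm

lemma entH_comp_injective {e : E → F} (he : e.Injective) (U : Ω → E) :
    entH μ (fun ω => e (U ω)) = entH μ U := by
  refine (Fintype.sum_of_injective e he _ _ (fun y hy => ?_) fun u => ?_).symm
  · have : (fun ω => e (U ω)) ⁻¹' {y} = ∅ := by
      ext ω
      simpa using fun h => hy ⟨U ω, h⟩
    simp [this]
  · congr 3
    ext ω
    simp [he.eq_iff]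

lemma entH_prodMk_comm (U : Ω → E) (V : Ω → F) :
    entH μ (fun ω => (U ω, V ω)) = entH μ (fun ω => (V ω, U ω)) :=
  entH_comp_injective Prod.swap_injective fun ω => (V ω, U ω)

lemma entH_prodMk_left_comm (U : Ω → E) (V : Ω → F) (W : Ω → G) :
    entH μ (fun ω => (U ω, V ω, W ω)) = entH μ (fun ω => (V ω, U ω, W ω)) :=
  entH_comp_injective (e := fun x : F × E × G => (x.2.1, x.1, x.2.2))
    (fun x y => by simp +contextual [Prod.ext_iff]) fun ω => (V ω, U ω, W ω)

lemma condMutInf_comm (U : Ω → E) (V : Ω → F) (W : Ω → G) :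
    condMutInf μ U V W = condMutInf μ V U W := by
  rw [condMutInf, condMutInf, entH_prodMk_left_comm U]
  ring

theorem condMutInf_nonneg_s12 [IsFiniteMeasure μ] {U : Ω → E} {V : Ω → F}
    (hU : ∀ u, MeasurableSet (U ⁻¹' {u})) (hV : ∀ v, MeasurableSet (V ⁻¹' {v})) (W : Ω → G) :
    0 ≤ condMutInf μ U V W := by
  have hmargU (u w) : ∑ v, μ.real (U ⁻¹' {u} ∩ (V ⁻¹' {v} ∩ W ⁻¹' {w})) =
      μ.real (U ⁻¹' {u} ∩ W ⁻¹' {w}) := by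
    simp only [Set.inter_left_comm (U ⁻¹' _), sum_measureReal_preimage_singleton_inter hV]
  have h (w) := sum_negMulLog_add_negMulLog_sum_le
    (p := fun u v => μ.real (U ⁻¹' {u} ∩ (V ⁻¹' {v} ∩ W ⁻¹' {w}))) fun _ _ => measureReal_nonneg
  simp only [hmargU, sum_measureReal_preimage_singleton_inter hU] at h
  have hsum := Finset.sum_le_sum fun w (_ : w ∈ Finset.univ) => h w
  simp only [Finset.sum_add_distrib, ← entH_prodMk, ← entH_prodMk_prodMk] at hsum
  have hW : entH μ W = ∑ w, Real.negMulLog (μ.real (W ⁻¹' {w})) := rfl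
  rw [condMutInf]
  linarith

lemma condMutInf_self (U : Ω → E) (W : Ω → G) : condMutInf μ U U W = condEnt μ U W := by
  have h : entH μ (fun ω => (U ω, U ω, W ω)) = entH μ (fun ω => (U ω, W ω)) :=
    entH_comp_injective (e := fun x : E × G => (x.1, x.1, x.2))
      (fun x y => by simp +contextual [Prod.ext_iff]) fun ω => (U ω, W ω)
  rw [condMutInf, condEnt, h]
  ring

lemma condEnt_nonneg [IsFiniteMeasure μ] {U : Ω → E} (hU : ∀ u, MeasurableSet (U ⁻¹' {u}))
    (W : Ω → G) : 0 ≤ condEnt μ U W :=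
  condMutInf_self (μ := μ) U W ▸ condMutInf_nonneg_s12 hU hU W

lemma mutInf_nonneg [IsProbabilityMeasure μ] {U : Ω → E} {V : Ω → F}
    (hU : ∀ u, MeasurableSet (U ⁻¹' {u})) (hV : ∀ v, MeasurableSet (V ⁻¹' {v})) :
    0 ≤ mutInf μ U V := by
  have h := condMutInf_nonneg_s12 (μ := μ) hU hV fun _ => ()
  have hconst : entH μ (fun _ => ()) = 0 := by simp [entH]
  have hU' : entH μ (fun ω => (U ω, ())) = entH μ U :=
    entH_comp_injective (Prod.mk_left_injective ()) U
  have hV' : entH μ (fun ω => (V ω, ())) = entH μ V :=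
    entH_comp_injective (Prod.mk_left_injective ()) V
  have hUV : entH μ (fun ω => (U ω, V ω, ())) = entH μ (fun ω => (U ω, V ω)) :=
    entH_comp_injective (e := fun x : E × F => (x.1, x.2, ()))
      (fun x y => by simp [Prod.ext_iff]) fun ω => (U ω, V ω)
  rwa [condMutInf, hU', hV', hUV, hconst, sub_zero] at h

lemma mutInf_prodMk_right (U : Ω → E) (V : Ω → F) (W : Ω → G) :
    mutInf μ U (fun ω => (V ω, W ω)) = mutInf μ U W + condMutInf μ U V W := by
  simp only [mutInf, condMutInf]
  ring

lemma mutInf_prodMk_right_comm (U : Ω → E) (V : Ω → F) (W : Ω → G) :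
    mutInf μ U (fun ω => (V ω, W ω)) = mutInf μ U (fun ω => (W ω, V ω)) := by
  have h : entH μ (fun ω => (U ω, V ω, W ω)) = entH μ (fun ω => (U ω, W ω, V ω)) :=
    entH_comp_injective (Function.injective_id.prodMap Prod.swap_injective)
      fun ω => (U ω, W ω, V ω)
  rw [mutInf, mutInf, h, entH_prodMk_comm V W]

theorem mutInf_le_mutInf_add_condMutInf [IsFiniteMeasure μ] {U : Ω → E} {W : Ω → G}
    (hU : ∀ u, MeasurableSet (U ⁻¹' {u})) (V : Ω → F) (hW : ∀ w, MeasurableSet (W ⁻¹' {w})) :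
    mutInf μ U V ≤ mutInf μ U W + condMutInf μ U V W :=
  calc mutInf μ U V ≤ mutInf μ U V + condMutInf μ U W V :=
        le_add_of_nonneg_right (condMutInf_nonneg_s12 hU hW V)
    _ = mutInf μ U W + condMutInf μ U V W := by
        rw [← mutInf_prodMk_right, mutInf_prodMk_right_comm, mutInf_prodMk_right]

lemma condMutInf_comp_left_le [IsFiniteMeasure μ] {H : Type*} [Fintype H] {U : Ω → E} {V : Ω → F}
    (hU : ∀ u, MeasurableSet (U ⁻¹' {u})) (hV : ∀ v, MeasurableSet (V ⁻¹' {v})) (W : Ω → G)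
    (k : E → G → H) :
    condMutInf μ (fun ω => k (U ω) (W ω)) V W ≤ condMutInf μ U V W := by
  have h := condMutInf_nonneg_s12 (μ := μ) hU hV fun ω => (k (U ω) (W ω), W ω)
  have hUW : entH μ (fun ω => (U ω, k (U ω) (W ω), W ω)) = entH μ (fun ω => (U ω, W ω)) :=
    entH_comp_injective (e := fun x : E × G => (x.1, k x.1 x.2, x.2))
      (fun x y => by simp +contextual [Prod.ext_iff]) fun ω => (U ω, W ω)
  have hUVW : entH μ (fun ω => (U ω, V ω, k (U ω) (W ω), W ω)) =
      entH μ (fun ω => (U ω, V ω, W ω)) :=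
    entH_comp_injective (e := fun x : E × F × G => (x.1, x.2.1, k x.1 x.2.2, x.2.2))
      (fun x y => by simp +contextual [Prod.ext_iff]) fun ω => (U ω, V ω, W ω)
  have hswap := entH_prodMk_left_comm (μ := μ) V (fun ω => k (U ω) (W ω)) W
  simp only [condMutInf, hUW, hUVW, hswap] at h ⊢
  linarith

lemma condMutInf_comp_comp_eq_zero [IsFiniteMeasure μ] {H K : Type*} [Fintype H] [Fintype K]
    {U : Ω → E} {V : Ω → F} {W : Ω → G} (hU : ∀ u, MeasurableSet (U ⁻¹' {u}))
    (hV : ∀ v, MeasurableSet (V ⁻¹' {v})) (hW : ∀ w, MeasurableSet (W ⁻¹' {w}))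
    (h : condMutInf μ U V W = 0) (k : E → G → H) (l : F → G → K) :
    condMutInf μ (fun ω => k (U ω) (W ω)) (fun ω => l (V ω) (W ω)) W = 0 := by
  have hkU := measurableSet_preimage_singleton_comp₂ hU hW k
  have hlV := measurableSet_preimage_singleton_comp₂ hV hW l
  refine le_antisymm ?_ (condMutInf_nonneg_s12 hkU hlV W)
  calc condMutInf μ (fun ω => k (U ω) (W ω)) (fun ω => l (V ω) (W ω)) W
      ≤ condMutInf μ U (fun ω => l (V ω) (W ω)) W := condMutInf_comp_left_le hU hlV W k
    _ = condMutInf μ (fun ω => l (V ω) (W ω)) U W := condMutInf_comm _ _ _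
    _ ≤ condMutInf μ V U W := condMutInf_comp_left_le hV hU W l
    _ = 0 := by rw [condMutInf_comm, h]

theorem mutInf_add_mutInf_le_entH_add_mutInf [IsFiniteMeasure μ] {U : Ω → E} {V : Ω → F}
    {W : Ω → G} (hU : ∀ u, MeasurableSet (U ⁻¹' {u})) (hV : ∀ v, MeasurableSet (V ⁻¹' {v}))
    (hW : ∀ w, MeasurableSet (W ⁻¹' {w})) :
    mutInf μ U V + mutInf μ U W ≤ entH μ U + mutInf μ V W := by
  have hVW := condMutInf_nonneg_s12 (μ := μ) hV hW U
  have hUVW := condEnt_nonneg (μ := μ) hU fun ω => (V ω, W ω)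
  have hrot : entH μ (fun ω => (V ω, W ω, U ω)) = entH μ (fun ω => (U ω, V ω, W ω)) :=
    entH_comp_injective (e := fun x : E × F × G => (x.2.1, x.2.2, x.1))
      (fun x y => by simp +contextual [Prod.ext_iff]) fun ω => (U ω, V ω, W ω)
  rw [condMutInf, hrot, entH_prodMk_comm V U, entH_prodMk_comm W U] at hVW
  rw [condEnt] at hUVW
  simp only [mutInf]
  linarith

lemma mutInf_add_mutInf_le_entH_add_mutInf_add_condMutInf_add_condMutInf
    {EB EC EX EY EZ : Type*}
    [Fintype EB] [Fintype EC] [Fintype EX] [Fintype EY] [Fintype EZ]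
    [IsFiniteMeasure μ] {B : Ω → EB} {C : Ω → EC} {X : Ω → EX}
    (hB : ∀ b, MeasurableSet (B ⁻¹' {b})) (hC : ∀ c, MeasurableSet (C ⁻¹' {c}))
    (hX : ∀ x, MeasurableSet (X ⁻¹' {x})) (Y : Ω → EY) (Z : Ω → EZ) :
    mutInf μ X Y + mutInf μ X Z ≤
      entH μ X + mutInf μ B C + condMutInf μ X Y C + condMutInf μ X Z B := by
  have hXY : mutInf μ X Y ≤ mutInf μ X C + condMutInf μ X Y C :=
    mutInf_le_mutInf_add_condMutInf hX Y hC
  have hXZ : mutInf μ X Z ≤ mutInf μ X B + condMutInf μ X Z B :=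
    mutInf_le_mutInf_add_condMutInf hX Z hB
  have hXBC : mutInf μ X B + mutInf μ X C ≤ entH μ X + mutInf μ B C :=
    mutInf_add_mutInf_le_entH_add_mutInf hX hB hC
  linarith

lemma entH_prodMk_prodMk_of_indep [IsProbabilityMeasure μ] {U : Ω → E} {V : Ω → F} {W : Ω → G}
    (hU : ∀ u, MeasurableSet (U ⁻¹' {u})) (hV : ∀ v, MeasurableSet (V ⁻¹' {v}))
    (hW : ∀ w, MeasurableSet (W ⁻¹' {w}))
    (hindep : ∀ u v w, μ (U ⁻¹' {u} ∩ V ⁻¹' {v} ∩ W ⁻¹' {w}) =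
      μ (U ⁻¹' {u}) * μ (V ⁻¹' {v}) * μ (W ⁻¹' {w})) :
    entH μ (fun ω => (U ω, V ω, W ω)) = entH μ U + entH μ V + entH μ W := by
  have hreal (u v w) : μ.real (U ⁻¹' {u} ∩ (V ⁻¹' {v} ∩ W ⁻¹' {w})) =
      μ.real (U ⁻¹' {u}) * μ.real (V ⁻¹' {v}) * μ.real (W ⁻¹' {w}) := by
    simp only [measureReal_def, ← Set.inter_assoc, hindep, ENNReal.toReal_mul]
  simp only [entH_prodMk_prodMk, hreal, Real.negMulLog_mul, mul_add, Finset.sum_add_distrib,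
    ← Finset.mul_sum, ← Finset.sum_mul, sum_measureReal_preimage_singleton_eq_one hU,
    sum_measureReal_preimage_singleton_eq_one hV, sum_measureReal_preimage_singleton_eq_one hW,
    one_mul, mul_one]
  rfl

lemma condMutInf_add_mutInf_add_mutInf (U : Ω → E) (V : Ω → F) (W : Ω → G) :
    condMutInf μ U V W + mutInf μ U W + mutInf μ V W =
      entH μ U + entH μ V + entH μ W - entH μ (fun ω => (U ω, V ω, W ω)) := by
  simp only [condMutInf, mutInf]
  ring

lemma condMutInf_eq_zero_and_mutInf_eq_zero_of_indep [IsProbabilityMeasure μ]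
    {U : Ω → E} {V : Ω → F} {W : Ω → G}
    (hU : ∀ u, MeasurableSet (U ⁻¹' {u})) (hV : ∀ v, MeasurableSet (V ⁻¹' {v}))
    (hW : ∀ w, MeasurableSet (W ⁻¹' {w}))
    (hindep : ∀ u v w, μ (U ⁻¹' {u} ∩ V ⁻¹' {v} ∩ W ⁻¹' {w}) =
      μ (U ⁻¹' {u}) * μ (V ⁻¹' {v}) * μ (W ⁻¹' {w})) :
    condMutInf μ U V W = 0 ∧ mutInf μ U W = 0 := by
  have hsum := condMutInf_add_mutInf_add_mutInf (μ := μ) U V W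
  rw [entH_prodMk_prodMk_of_indep hU hV hW hindep, sub_self] at hsum
  have hUVW := condMutInf_nonneg_s12 (μ := μ) hU hV W
  have hUW := mutInf_nonneg (μ := μ) hU hW
  have hVW := mutInf_nonneg (μ := μ) hV hW
  exact ⟨by linarith, by linarith⟩

end Entropy

/-- **Entropy inequality for the classical triangle scenario**: if `A, B, C` are
mutually independent finite random variables and `X = f (B, C)`, `Y = g (A, C)`,
`Z = h (A, B)`, then `I(X:Y) + I(X:Z) ≤ H(X)`. -/
theorem triangle_entropy_inequality
    {Ω EA EB EC EX EY EZ : Type*} [MeasurableSpace Ω]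
    [Fintype EA] [Fintype EB] [Fintype EC] [Fintype EX] [Fintype EY] [Fintype EZ]
    [MeasurableSpace EA] [MeasurableSingletonClass EA]
    [MeasurableSpace EB] [MeasurableSingletonClass EB]
    [MeasurableSpace EC] [MeasurableSingletonClass EC]
    (μ : Measure Ω) [IsProbabilityMeasure μ]
    (A : Ω → EA) (B : Ω → EB) (C : Ω → EC)
    (hA : Measurable A) (hB : Measurable B) (hC : Measurable C)
    (hindep : ∀ (a : EA) (b : EB) (c : EC),
      μ (A ⁻¹' {a} ∩ B ⁻¹' {b} ∩ C ⁻¹' {c})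
        = μ (A ⁻¹' {a}) * μ (B ⁻¹' {b}) * μ (C ⁻¹' {c}))
    (f : EB → EC → EX) (g : EA → EC → EY) (h : EA → EB → EZ)
    (X : Ω → EX) (Y : Ω → EY) (Z : Ω → EZ)
    (hX : ∀ ω, X ω = f (B ω) (C ω)) (hY : ∀ ω, Y ω = g (A ω) (C ω))
    (hZ : ∀ ω, Z ω = h (A ω) (B ω)) :
    mutInf μ X Y + mutInf μ X Z ≤ entH μ X := by
  have hA' (a) := hA (measurableSet_singleton a)
  have hB' (b) := hB (measurableSet_singleton b)
  have hC' (c) := hC (measurableSet_singleton c)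
  have hX' : ∀ x, MeasurableSet (X ⁻¹' {x}) :=
    funext hX ▸ measurableSet_preimage_singleton_comp₂ hB' hC' f
  obtain ⟨hBAC, hBC⟩ := condMutInf_eq_zero_and_mutInf_eq_zero_of_indep hB' hA' hC'
    fun b a c => by rw [Set.inter_comm (B ⁻¹' _), hindep, mul_comm (μ (A ⁻¹' _))]
  obtain ⟨hCAB, -⟩ := condMutInf_eq_zero_and_mutInf_eq_zero_of_indep hC' hA' hB'
    fun c a b => by rw [Set.inter_assoc, Set.inter_comm, hindep]; ring
  have hXY : condMutInf μ X Y C = 0 := by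
    rw [funext hX, funext hY]
    exact condMutInf_comp_comp_eq_zero hB' hA' hC' hBAC f g
  have hXZ : condMutInf μ X Z B = 0 := by
    rw [funext hX, funext hZ]
    exact condMutInf_comp_comp_eq_zero hC' hA' hB' hCAB (flip f) h
  simpa only [hBC, hXY, hXZ, add_zero] using
    mutInf_add_mutInf_le_entH_add_mutInf_add_condMutInf_add_condMutInf (μ := μ)
      hB' hC' hX' Y Z
end
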